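/- arXiv:2302.11417 — 7 statements merged into one kernel-verified Lean document; each statement's English description precedes it below -/
import Mathlib

section
/- Let H = (X, (s_i)_{i ∈ I}) be a hypergraph and let (R_1, R_2) be a pair with R_1 ⊆ I and R_2 ⊆ X. Then (R_1, R_2) is a minimal Roman hitting set of H if and only if the following two conditions hold: (1) for every i ∈ R_1, s_i ∩ R_2 = ∅; and (2) R_2 is a minimal hitting set of the family (s_i)_{i ∈ I \ R_1}. -/
/-- A Roman hitting set of the hypergraph given by the hyperedge family `s`:
a pair `(R1, R2)` such that every index `i` is in `R1` or `s i` meets `R2`. -/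
def IsRHS {X I : Type*} (s : I → Set X) (R1 : Set I) (R2 : Set X) : Prop :=
  ∀ i : I, i ∈ R1 ∨ (s i ∩ R2).Nonempty

/-- A minimal Roman hitting set: a rhs such that every rhs `(P1, P2) ≤ (R1, R2)`
equals `(R1, R2)`. -/
def IsMinimalRHS {X I : Type*} (s : I → Set X) (R1 : Set I) (R2 : Set X) : Prop :=
  IsRHS s R1 R2 ∧
    ∀ (P1 : Set I) (P2 : Set X), IsRHS s P1 P2 → P1 ⊆ R1 → P2 ⊆ R2 → P1 = R1 ∧ P2 = R2

/-- `D` is a hitting set of the subfamily `(s i)_{i ∈ J}`. -/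
def IsHittingSet {X I : Type*} (s : I → Set X) (J : Set I) (D : Set X) : Prop :=
  ∀ i ∈ J, (D ∩ s i).Nonempty

/-- `D` is a minimal hitting set of the subfamily `(s i)_{i ∈ J}`:
no proper subset of `D` is a hitting set of the subfamily. -/
def IsMinimalHittingSet {X I : Type*} (s : I → Set X) (J : Set I) (D : Set X) : Prop :=
  IsHittingSet s J D ∧ ∀ D' : Set X, D' ⊂ D → ¬ IsHittingSet s J D'

/-- A Roman hitting function for the hypergraph `s` with correspondence `τ`. -/
def IsRHF {X I : Type*} (s : I → Set X) (τ : X → I) (f : X → Fin 3) : Prop :=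
  ∀ i : I, (∃ x ∈ s i, f x = 2) ∨ (∃ x : X, τ x = i ∧ f x = 1)

/-- A minimal Roman hitting function: every rhf `g ≤ f` (pointwise) equals `f`. -/
def IsMinimalRHF {X I : Type*} (s : I → Set X) (τ : X → I) (f : X → Fin 3) : Prop :=
  IsRHF s τ f ∧ ∀ g : X → Fin 3, IsRHF s τ g → (∀ x, g x ≤ f x) → g = f

/-- `f` is extensible: some minimal rhf `g` satisfies `f ≤ g` pointwise. -/
def Extensible {X I : Type*} (s : I → Set X) (τ : X → I) (f : X → Fin 3) : Prop :=
  ∃ g : X → Fin 3, IsMinimalRHF s τ g ∧ ∀ x, f x ≤ g x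

/-- The indices of the hyperedges that `D` misses: the least `R1` for which `(R1, D)` is a Roman
hitting set. -/
def unhit {X I : Type*} (s : I → Set X) (D : Set X) : Set I :=
  {i | s i ∩ D = ∅}

section

variable {X I : Type*} {s : I → Set X} {R1 : Set I} {R2 : Set X}

theorem unhit_subset_unhit {D E : Set X} (hDE : D ⊆ E) : unhit s E ⊆ unhit s D :=
  fun i hi => Set.subset_eq_empty (Set.inter_subset_inter_right (s i) hDE) hi

theorem isRHS_iff_unhit_subset : IsRHS s R1 R2 ↔ unhit s R2 ⊆ R1 :=
  forall_congr' fun _ => by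
    rw [or_iff_not_imp_right, Set.not_nonempty_iff_eq_empty, unhit, Set.mem_ofPred_eq]

theorem isRHS_iff_isHittingSet_compl : IsRHS s R1 R2 ↔ IsHittingSet s R1ᶜ R2 :=
  forall_congr' fun _ => by
    rw [or_iff_not_imp_left, Set.inter_comm, Set.mem_compl_iff]

theorem IsMinimalHittingSet.eq_of_subset {J : Set I} {D E : Set X}
    (hD : IsMinimalHittingSet s J D) (hE : IsHittingSet s J E) (hED : E ⊆ D) : E = D :=
  hED.eq_or_ssubset.resolve_right fun hlt => hD.2 E hlt hE

theorem IsMinimalRHS.unhit_eq (h : IsMinimalRHS s R1 R2) : unhit s R2 = R1 :=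
  (h.2 (unhit s R2) R2 (isRHS_iff_unhit_subset.2 subset_rfl)
    (isRHS_iff_unhit_subset.1 h.1) subset_rfl).1

theorem IsMinimalRHS.isMinimalHittingSet_compl (h : IsMinimalRHS s R1 R2) :
    IsMinimalHittingSet s R1ᶜ R2 :=
  ⟨isRHS_iff_isHittingSet_compl.1 h.1, fun D hlt hD =>
    hlt.ne (h.2 R1 D (isRHS_iff_isHittingSet_compl.2 hD) subset_rfl hlt.subset).2⟩

theorem IsMinimalHittingSet.isMinimalRHS (h : IsMinimalHittingSet s R1ᶜ R2)
    (hR1 : R1 ⊆ unhit s R2) : IsMinimalRHS s R1 R2 := by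
  refine ⟨isRHS_iff_isHittingSet_compl.2 h.1, fun P1 P2 hP hP1 hP2 => ?_⟩
  have hP1_eq : P1 = R1 :=
    hP1.antisymm <| calc
      R1 ⊆ unhit s R2 := hR1
      _ ⊆ unhit s P2 := unhit_subset_unhit hP2
      _ ⊆ P1 := isRHS_iff_unhit_subset.1 hP
  subst hP1_eq
  exact ⟨rfl, h.eq_of_subset (isRHS_iff_isHittingSet_compl.1 hP) hP2⟩

end

theorem minimalRHS_iff_general {X I : Type*} (s : I → Set X) (R1 : Set I) (R2 : Set X) :
    IsMinimalRHS s R1 R2 ↔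
      (∀ i ∈ R1, s i ∩ R2 = ∅) ∧ IsMinimalHittingSet s R1ᶜ R2 :=
  ⟨fun h => ⟨h.unhit_eq.ge, h.isMinimalHittingSet_compl⟩,
    fun ⟨hR1, h⟩ => h.isMinimalRHS hR1⟩

/-- Characterization of minimal Roman hitting sets. -/
theorem minimalRHS_iff {X I : Type*} [Fintype X] [Fintype I]
    (s : I → Set X) (R1 : Set I) (R2 : Set X) :
    IsMinimalRHS s R1 R2 ↔
      (∀ i ∈ R1, s i ∩ R2 = ∅) ∧ IsMinimalHittingSet s R1ᶜ R2 :=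
  minimalRHS_iff_general s R1 R2
end

section
/- Let H = (X, (s_i)_{i ∈ I}) be a hypergraph with correspondence τ and let f be a minimal Roman hitting function for (H, τ). Then for all x, y ∈ f⁻¹(1) with x ≠ y one has τ(x) ≠ τ(y); that is, the restriction of τ to f⁻¹(1) is injective. -/
section

variable {X I : Type*} {s : I → Set X} {τ : X → I} {f : X → Fin 3}

theorem IsRHF.update_of_exists_one [DecidableEq X] {x : X} (hf : IsRHF s τ f) (hx : f x ≠ 2)
    (hy : ∃ y ≠ x, τ y = τ x ∧ f y = 1) (a : Fin 3) : IsRHF s τ (Function.update f x a) := by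
  intro i
  rcases hf i with ⟨z, hzi, hz⟩ | ⟨z, rfl, hz⟩
  · have hzx : z ≠ x := ne_of_apply_ne f (hz ▸ hx.symm)
    exact .inl ⟨z, hzi, by rw [Function.update_of_ne hzx, hz]⟩
  · obtain ⟨w, hwx, hwz, hw⟩ : ∃ w ≠ x, τ w = τ z ∧ f w = 1 := by
      rcases eq_or_ne z x with rfl | hzx
      · exact hy
      · exact ⟨z, hzx, rfl, hz⟩
    exact .inr ⟨w, hwz, by rw [Function.update_of_ne hwx, hw]⟩

theorem IsMinimalRHF.not_isRHF_of_lt {g : X → Fin 3} (hf : IsMinimalRHF s τ f) (hgf : g < f) :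
    ¬ IsRHF s τ g :=
  fun hg => hgf.ne (hf.2 g hg hgf.le)

theorem minimalRHF_injOn_ones_general (hf : IsMinimalRHF s τ f) : Set.InjOn τ (f ⁻¹' {1}) := by
  classical
  intro x (hx : f x = 1) y (hy : f y = 1) hτxy
  by_contra hxy
  have hlt : Function.update f x 0 < f := update_lt_self_iff.mpr (by simp [hx])
  exact hf.not_isRHF_of_lt hlt <|
    hf.1.update_of_exists_one (by simp [hx]) ⟨y, Ne.symm hxy, hτxy.symm, hy⟩ 0

end

/-- For a minimal rhf `f`, the correspondence `τ` is injective
on `f⁻¹(1)`. -/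
theorem minimalRHF_injOn_ones {X I : Type*} [Fintype X] [Fintype I]
    (s : I → Set X) (τ : X → I) (hτ : ∀ x, x ∈ s (τ x))
    (f : X → Fin 3) (hmin : IsMinimalRHF s τ f) :
    ∀ x ∈ f ⁻¹' {1}, ∀ y ∈ f ⁻¹' {1}, x ≠ y → τ x ≠ τ y :=
  fun _ hx _ hy => (minimalRHF_injOn_ones_general hmin).ne hx hy
end

section
/- Let H = (X, (s_i)_{i ∈ I}) be a hypergraph with correspondence τ and let f be a minimal Roman hitting function for (H, τ). Then for every x ∈ f⁻¹(1), the sets s_{τ(x)} and f⁻¹(2) are disjoint. -/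
section

variable {X I : Type*} {s : I → Set X} {τ : X → I} {f : X → Fin 3} {x y : X}

-- A value other than `2` at `x` can only serve the index `τ x`, whose hyperedge `y` already hits.
theorem IsRHF.update_zero [DecidableEq X] (hf : IsRHF s τ f) (hx : f x ≠ 2)
    (hys : y ∈ s (τ x)) (hy : f y = 2) : IsRHF s τ (Function.update f x 0) := by
  have update_eq_two {z : X} (hz : f z = 2) : Function.update f x 0 z = 2 := by
    have hzx : z ≠ x := fun h => hx (h ▸ hz)
    rw [Function.update_of_ne hzx, hz]
  intro i
  rcases hf i with ⟨z, hzs, hz⟩ | ⟨z, rfl, hz⟩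
  · exact Or.inl ⟨z, hzs, update_eq_two hz⟩
  · obtain rfl | hzx := eq_or_ne z x
    · exact Or.inl ⟨y, hys, update_eq_two hy⟩
    · exact Or.inr ⟨z, rfl, by rw [Function.update_of_ne hzx, hz]⟩

theorem IsMinimalRHF.eq_of_isRHF_update [DecidableEq X] {a : Fin 3} (hf : IsMinimalRHF s τ f)
    (ha : a ≤ f x) (hupdate : IsRHF s τ (Function.update f x a)) : a = f x :=
  Function.update_eq_self_iff.mp (hf.2 _ hupdate (update_le_self_iff.mpr ha))

theorem minimalRHF_tau_edge_disjoint_general (hf : IsMinimalRHF s τ f) (hx : f x = 1) :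
    Disjoint (s (τ x)) (f ⁻¹' {2}) := by
  classical
  refine Set.disjoint_left.mpr fun y hys hy => ?_
  have hx_ne_two : f x ≠ 2 := by simp [hx]
  have hx_zero : 0 = f x :=
    hf.eq_of_isRHF_update (Fin.zero_le _) (hf.1.update_zero hx_ne_two hys hy)
  simp [hx] at hx_zero

end

/-- For a minimal rhf `f` and every `x ∈ f⁻¹(1)`, the hyperedge
`s (τ x)` is disjoint from `f⁻¹(2)`. -/
theorem minimalRHF_tau_edge_disjoint {X I : Type*} [Fintype X] [Fintype I]
    (s : I → Set X) (τ : X → I) (hτ : ∀ x, x ∈ s (τ x))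
    (f : X → Fin 3) (hmin : IsMinimalRHF s τ f) :
    ∀ x ∈ f ⁻¹' {1}, s (τ x) ∩ f ⁻¹' {2} = ∅ :=
  fun _ hx => (minimalRHF_tau_edge_disjoint_general hmin hx).inter_eq
end

section
/- Let H = (X, (s_i)_{i ∈ I}) be a hypergraph with correspondence τ and let f be a minimal Roman hitting function for (H, τ). Then f⁻¹(2) is a minimal hitting set of the family (s_i)_{i ∈ J}, where J = { i ∈ I : τ⁻¹(i) ∩ f⁻¹(1) = ∅ }. -/
section

variable {X I : Type*} {s : I → Set X} {τ : X → I} {f : X → Fin 3}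

theorem isRHF_iff_isHittingSet :
    IsRHF s τ f ↔ IsHittingSet s {i : I | τ ⁻¹' {i} ∩ f ⁻¹' {1} = ∅} (f ⁻¹' {2}) := by
  refine forall_congr' fun i ↦ ?_
  have twos_meet : (f ⁻¹' {2} ∩ s i).Nonempty ↔ ∃ x ∈ s i, f x = 2 :=
    exists_congr fun _ ↦ and_comm
  have ones_meet : τ ⁻¹' {i} ∩ f ⁻¹' {1} ≠ ∅ ↔ ∃ x, τ x = i ∧ f x = 1 :=
    Set.nonempty_iff_ne_empty.symm
  rw [← twos_meet, ← ones_meet, or_comm, ← imp_iff_not_or, Set.mem_ofPred_eq]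

/-- The labelling that keeps a label `2` of `f` only on `D`, lowering the others to `0`, and agrees
with `f` elsewhere. It removes elements from `f⁻¹(2)` without touching `f⁻¹(1)`. -/
noncomputable def restrictTwos (f : X → Fin 3) (D : Set X) : X → Fin 3 :=
  (f ⁻¹' {2} \ D)ᶜ.indicator f

theorem restrictTwos_le (f : X → Fin 3) (D : Set X) : restrictTwos f D ≤ f :=
  Set.indicator_le_self' fun x _ ↦ Fin.zero_le (f x)

theorem restrictTwos_preimage_one (f : X → Fin 3) (D : Set X) :
    restrictTwos f D ⁻¹' {1} = f ⁻¹' {1} := by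
  have ones_disjoint_twos : Disjoint (f ⁻¹' {1}) (f ⁻¹' {2}) :=
    Disjoint.preimage f (by simp)
  calc restrictTwos f D ⁻¹' {1} = f ⁻¹' {1} ∩ (f ⁻¹' {2} \ D)ᶜ :=
        Set.indicator_preimage_of_notMem _ _ (by simp)
    _ = f ⁻¹' {1} :=
        Set.inter_eq_left.mpr (ones_disjoint_twos.mono_right Set.sdiff_subset).subset_compl_right

theorem restrictTwos_preimage_two (f : X → Fin 3) (D : Set X) :
    restrictTwos f D ⁻¹' {2} = f ⁻¹' {2} ∩ D :=
  calc restrictTwos f D ⁻¹' {2} = f ⁻¹' {2} ∩ (f ⁻¹' {2} \ D)ᶜ :=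
        Set.indicator_preimage_of_notMem _ _ (by simp)
    _ = f ⁻¹' {2} ∩ D := by rw [← Set.sdiff_eq, Set.sdiff_sdiff_right_self]

theorem minimalRHF_twos_minimalHittingSet_general (hmin : IsMinimalRHF s τ f) :
    IsMinimalHittingSet s {i : I | τ ⁻¹' {i} ∩ f ⁻¹' {1} = ∅} (f ⁻¹' {2}) := by
  obtain ⟨hf, eq_of_le⟩ := hmin
  refine ⟨isRHF_iff_isHittingSet.mp hf, fun D hD hit ↦ hD.ne ?_⟩
  have twos_eq : restrictTwos f D ⁻¹' {2} = D := by
    rw [restrictTwos_preimage_two, Set.inter_eq_right.mpr hD.subset]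
  have restrict_isRHF : IsRHF s τ (restrictTwos f D) := by
    rwa [isRHF_iff_isHittingSet, restrictTwos_preimage_one, twos_eq]
  rw [← twos_eq, eq_of_le _ restrict_isRHF (restrictTwos_le f D)]

end

/-- For a minimal rhf `f`, `f⁻¹(2)` is a minimal hitting set of
the family `(s i)` over those `i` with `τ⁻¹(i) ∩ f⁻¹(1) = ∅`. -/
theorem minimalRHF_twos_minimalHittingSet {X I : Type*} [Fintype X] [Fintype I]
    (s : I → Set X) (τ : X → I) (hτ : ∀ x, x ∈ s (τ x))
    (f : X → Fin 3) (hmin : IsMinimalRHF s τ f) :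
    IsMinimalHittingSet s {i : I | τ ⁻¹' {i} ∩ f ⁻¹' {1} = ∅} (f ⁻¹' {2}) :=
  minimalRHF_twos_minimalHittingSet_general hmin
end

section
/- Let H = (X, (s_i)_{i ∈ I}) be a hypergraph and let τ : X → I be a correspondence. Then τ is surjective if and only if for every Roman hitting set (R_1, R_2) of H there exists a Roman hitting function f : X → {0,1,2} for (H, τ) with f⁻¹(2) = R_2. -/
section RomanHitting

variable {X I : Type*} {s : I → Set X} {τ : X → I} {R : Set X}

theorem IsRHS.mono_left {R₁ R₁' : Set I} (hR : IsRHS s R₁ R) (hsub : R₁ ⊆ R₁') :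
    IsRHS s R₁' R :=
  fun i ↦ (hR i).imp_left fun hi ↦ hsub hi

theorem isRHS_empty_right_iff {R₁ : Set I} : IsRHS s R₁ ∅ ↔ R₁ = Set.univ := by
  simp [IsRHS, Set.eq_univ_iff_forall]

theorem IsRHF.isRHS_range_preimage_two {f : X → Fin 3} (hf : IsRHF s τ f) :
    IsRHS s (Set.range τ) (f ⁻¹' {2}) := by
  intro i
  rcases hf i with ⟨x, hxs, hfx⟩ | ⟨x, hxi, -⟩
  · exact Or.inr ⟨x, hxs, hfx⟩
  · exact Or.inl ⟨x, hxi⟩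

open Classical in
/-- The pointwise largest function `f : X → {0, 1, 2}` with `f⁻¹(2) = R`. For a correspondence it
is a Roman hitting function as soon as some function with the same preimage of `2` is one. -/
noncomputable def maxRomanFunction (R : Set X) (x : X) : Fin 3 :=
  if x ∈ R then 2 else 1

theorem maxRomanFunction_of_mem {x : X} (hx : x ∈ R) : maxRomanFunction R x = 2 :=
  if_pos hx

theorem maxRomanFunction_of_notMem {x : X} (hx : x ∉ R) : maxRomanFunction R x = 1 :=
  if_neg hx

theorem maxRomanFunction_preimage_two (R : Set X) : maxRomanFunction R ⁻¹' {2} = R := by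
  ext x
  by_cases hx : x ∈ R
  · simp [maxRomanFunction_of_mem hx, hx]
  · simp [maxRomanFunction_of_notMem hx, hx]

theorem IsRHS.isRHF_maxRomanFunction (hR : IsRHS s (Set.range τ) R)
    (hτ : ∀ x, x ∈ s (τ x)) : IsRHF s τ (maxRomanFunction R) := by
  intro i
  rcases hR i with ⟨x, rfl⟩ | ⟨x, hxs, hxR⟩
  · by_cases hx : x ∈ R
    · exact Or.inl ⟨x, hτ x, maxRomanFunction_of_mem hx⟩
    · exact Or.inr ⟨x, rfl, maxRomanFunction_of_notMem hx⟩
  · exact Or.inl ⟨x, hxs, maxRomanFunction_of_mem hxR⟩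

theorem exists_isRHF_preimage_two_eq_iff (hτ : ∀ x, x ∈ s (τ x)) :
    (∃ f : X → Fin 3, IsRHF s τ f ∧ f ⁻¹' {2} = R) ↔ IsRHS s (Set.range τ) R := by
  constructor
  · rintro ⟨f, hf, rfl⟩
    exact hf.isRHS_range_preimage_two
  · intro hR
    exact ⟨maxRomanFunction R, hR.isRHF_maxRomanFunction hτ, maxRomanFunction_preimage_two R⟩

end RomanHitting

theorem surjective_iff_rhs_gives_rhf_general {X I : Type*}
    (s : I → Set X) (τ : X → I) (hτ : ∀ x, x ∈ s (τ x)) :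
    Function.Surjective τ ↔
      ∀ (R1 : Set I) (R2 : Set X), IsRHS s R1 R2 →
        ∃ f : X → Fin 3, IsRHF s τ f ∧ f ⁻¹' {2} = R2 := by
  simp_rw [exists_isRHF_preimage_two_eq_iff hτ, ← Set.range_eq_univ]
  constructor
  · intro hrange R1 R2 hR
    exact hR.mono_left (hrange ▸ Set.subset_univ R1)
  · intro h
    exact isRHS_empty_right_iff.mp (h Set.univ ∅ (isRHS_empty_right_iff.mpr rfl))

/-- The correspondence `τ` is surjective iff every Roman hitting
set `(R1, R2)` admits a Roman hitting function `f` with `f⁻¹(2) = R2`. -/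
theorem surjective_iff_rhs_gives_rhf {X I : Type*} [Fintype X] [Fintype I]
    (s : I → Set X) (τ : X → I) (hτ : ∀ x, x ∈ s (τ x)) :
    Function.Surjective τ ↔
      ∀ (R1 : Set I) (R2 : Set X), IsRHS s R1 R2 →
        ∃ f : X → Fin 3, IsRHF s τ f ∧ f ⁻¹' {2} = R2 :=
  surjective_iff_rhs_gives_rhf_general s τ hτ
end

section
/- Let G = (V, E) be a finite simple graph and let G_nb = (V, (N[v])_{v ∈ V}) be its closed-neighborhood hypergraph. A function f : V → {0,1,2} is a PO-minimal Roman dominating function of G if and only if the pair (f⁻¹(1), f⁻¹(2)) is a minimal Roman hitting set of G_nb. -/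
/-- A Roman dominating function of a (simple) graph. -/
def IsRDF {V : Type*} (G : SimpleGraph V) (f : V → Fin 3) : Prop :=
  ∀ v, f v = 0 → ∃ u, G.Adj v u ∧ f u = 2

/-- A PO-minimal Roman dominating function: every rdf `g` with `g ≤_PO f`
(i.e., `g v = 0` or `g v = f v` for all `v`) equals `f`. -/
def IsPOMinimalRDF {V : Type*} (G : SimpleGraph V) (f : V → Fin 3) : Prop :=
  IsRDF G f ∧ ∀ g : V → Fin 3, IsRDF G g → (∀ v, g v = 0 ∨ g v = f v) → g = f

/-!
A function `f : V → Fin 3` is the same thing as the disjoint pair of its level sets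
`(f⁻¹(1), f⁻¹(2))`. Under this correspondence Roman domination becomes Roman hitting of the closed
neighborhoods, and `≤_PO` becomes componentwise inclusion. Every pair below `(f⁻¹(1), f⁻¹(2))` is
again disjoint, hence again the pair of level sets of a function, so the two notions of minimality
range over the same objects.
-/

/-- The relation `g ≤_PO f` comparing Roman dominating functions: `g` arises from `f` by resetting
some values to `0`. It is stated for values in any type with a zero. -/
def POLe {α β : Type*} [Zero β] (g f : α → β) : Prop :=
  ∀ v, g v = 0 ∨ g v = f v

theorem POLe.antisymm {α β : Type*} [Zero β] {g f : α → β} (hgf : POLe g f) (hfg : POLe f g) :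
    g = f := by
  funext v
  rcases hgf v with hg | h
  · rcases hfg v with hf | h
    · exact hg.trans hf.symm
    · exact h.symm
  · exact h

theorem poLe_iff_forall_preimage_subset {α β : Type*} [Zero β] {g f : α → β} :
    POLe g f ↔ ∀ c ≠ 0, g ⁻¹' {c} ⊆ f ⁻¹' {c} := by
  constructor
  · rintro h c hc v rfl
    exact ((h v).resolve_left hc).symm
  · intro h v
    exact or_iff_not_imp_left.2 fun hv => (h (g v) hv rfl).symm

theorem poLe_iff_preimage_one_two_subset {α : Type*} {g f : α → Fin 3} :
    POLe g f ↔ g ⁻¹' {1} ⊆ f ⁻¹' {1} ∧ g ⁻¹' {2} ⊆ f ⁻¹' {2} := by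
  simp [poLe_iff_forall_preimage_subset, Fin.forall_fin_succ]

theorem eq_of_preimage_one_two_eq {α : Type*} {g f : α → Fin 3}
    (h₁ : g ⁻¹' {1} = f ⁻¹' {1}) (h₂ : g ⁻¹' {2} = f ⁻¹' {2}) : g = f :=
  (poLe_iff_preimage_one_two_subset.2 ⟨h₁.subset, h₂.subset⟩).antisymm
    (poLe_iff_preimage_one_two_subset.2 ⟨h₁.superset, h₂.superset⟩)

theorem disjoint_of_subset_preimage_one_two {α : Type*} {f : α → Fin 3} {P₁ P₂ : Set α}
    (h₁ : P₁ ⊆ f ⁻¹' {1}) (h₂ : P₂ ⊆ f ⁻¹' {2}) : Disjoint P₁ P₂ :=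
  have one_ne_two : (1 : Fin 3) ≠ 2 := by decide
  ((Set.disjoint_singleton.2 one_ne_two).preimage f).mono h₁ h₂

theorem exists_preimage_one_two_eq {α : Type*} {P₁ P₂ : Set α} (hP : Disjoint P₁ P₂) :
    ∃ g : α → Fin 3, g ⁻¹' {1} = P₁ ∧ g ⁻¹' {2} = P₂ := by
  classical
  refine ⟨fun v => if v ∈ P₁ then 1 else if v ∈ P₂ then 2 else 0, ?_, ?_⟩
  · ext v
    by_cases v ∈ P₁ <;> by_cases v ∈ P₂ <;> simp [*]
  · ext v
    by_cases hv : v ∈ P₁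
    · simp [hv, hP.notMem_of_mem_left hv]
    · by_cases v ∈ P₂ <;> simp [*]

theorem isRDF_iff_isRHS {V : Type*} (G : SimpleGraph V) (f : V → Fin 3) :
    IsRDF G f ↔
      IsRHS (fun v : V => insert v (G.neighborSet v)) (f ⁻¹' {1}) (f ⁻¹' {2}) := by
  refine forall_congr' fun v => ?_
  have value_cases : ∀ c : Fin 3, c = 0 ∨ c = 1 ∨ c = 2 := by decide
  rcases value_cases (f v) with hv | hv | hv
  · -- Here `v` itself is not in `f⁻¹(2)`, so `N[v]` can only be hit in a proper neighbor.
    simp [hv, Set.Nonempty]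
  · exact iff_of_true (by simp [hv]) (Or.inl hv)
  · exact iff_of_true (by simp [hv]) (Or.inr ⟨v, Set.mem_insert v _, hv⟩)

theorem poMinimalRDF_iff_minimalRHS_general {V : Type*} (G : SimpleGraph V) (f : V → Fin 3) :
    IsPOMinimalRDF G f ↔
      IsMinimalRHS (fun v : V => insert v (G.neighborSet v))
        (f ⁻¹' {1}) (f ⁻¹' {2}) := by
  refine and_congr (isRDF_iff_isRHS G f) ⟨fun hf P₁ P₂ hP h₁ h₂ => ?_, fun hf g hg hgf => ?_⟩
  · obtain ⟨g, rfl, rfl⟩ :=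
      exists_preimage_one_two_eq (disjoint_of_subset_preimage_one_two h₁ h₂)
    have g_eq_f : g = f :=
      hf g ((isRDF_iff_isRHS G g).2 hP) (poLe_iff_preimage_one_two_subset.2 ⟨h₁, h₂⟩)
    exact ⟨by rw [g_eq_f], by rw [g_eq_f]⟩
  · obtain ⟨h₁, h₂⟩ := poLe_iff_preimage_one_two_subset.1 hgf
    obtain ⟨e₁, e₂⟩ := hf _ _ ((isRDF_iff_isRHS G g).1 hg) h₁ h₂
    exact eq_of_preimage_one_two_eq e₁ e₂

/-- `f` is a PO-minimal rdf of `G` iff `(f⁻¹(1), f⁻¹(2))` is a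
minimal Roman hitting set of the closed-neighborhood hypergraph of `G`. -/
theorem poMinimalRDF_iff_minimalRHS {V : Type*} [Fintype V] (G : SimpleGraph V)
    (f : V → Fin 3) :
    IsPOMinimalRDF G f ↔
      IsMinimalRHS (fun v : V => insert v (G.neighborSet v))
        (f ⁻¹' {1}) (f ⁻¹' {2}) :=
  poMinimalRDF_iff_minimalRHS_general G f
end

section
/- For every n ≥ 1, consider the hypergraph H = (X, (s_i)_{i ∈ I}) with X = {x_1, …, x_{2n}} (2n distinct elements), I = {1, …, n}, and s_i = {x_{2i−1}, x_{2i}} for each i ∈ I. Then the number of minimal Roman hitting sets of H is exactly 3^n; in particular, H has at least 3^{(|X| + |I|)/3} minimal Roman hitting sets. -/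
open scoped Function

/-!
Choose, for every hyperedge, either its index or one of its elements. Each such choice yields a
Roman hitting set, and every Roman hitting set contains one of this form. When the hyperedges are
pairwise disjoint, two comparable choices are equal, so the choices are in bijection with the
minimal Roman hitting sets, and there are `∏ i, (|s i| + 1)` of them.
-/

/-- One way of handling each hyperedge of `s`: by its index (`none`) or by one of its elements
(`some x`). -/
abbrev HyperedgeChoice {X I : Type*} (s : I → Set X) : Type _ :=
  ∀ i, Option (s i)

namespace HyperedgeChoice

variable {X I : Type*} {s : I → Set X}

/-- The pair `(R₁, R₂)` of the indices and the elements selected by a choice. -/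
def toPair (f : HyperedgeChoice s) : Set I × Set X :=
  ({i | f i = none}, {x | ∃ i, ∃ hx : x ∈ s i, f i = some ⟨x, hx⟩})

theorem isRHS_toPair (f : HyperedgeChoice s) : IsRHS s f.toPair.1 f.toPair.2 := by
  intro i
  cases hfi : f i with
  | none => exact Or.inl hfi
  | some x => exact Or.inr ⟨x, x.2, i, x.2, hfi⟩

theorem exists_toPair_le {R : Set I × Set X} (hR : IsRHS s R.1 R.2) :
    ∃ f : HyperedgeChoice s, f.toPair ≤ R := by
  have hchoice (i : I) : ∃ o : Option (s i), (o = none → i ∈ R.1) ∧ ∀ x ∈ o, (x : X) ∈ R.2 := by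
    rcases hR i with hi | ⟨x, hxs, hxR⟩
    · exact ⟨none, fun _ ↦ hi, by simp⟩
    · exact ⟨some ⟨x, hxs⟩, by simp, by simpa using hxR⟩
  choose f hindex helement using hchoice
  exact ⟨f, hindex, fun _ ⟨i, _, hfi⟩ ↦ helement i _ hfi⟩

theorem mem_toPair_snd_iff (hs : Pairwise (Disjoint on s)) (f : HyperedgeChoice s) {i : I}
    (x : s i) : (x : X) ∈ f.toPair.2 ↔ f i = some x := by
  refine ⟨fun ⟨j, hxj, hfj⟩ ↦ ?_, fun hfi ↦ ⟨i, x.2, hfi⟩⟩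
  obtain rfl : j = i := hs.eq (Set.not_disjoint_iff.mpr ⟨x, hxj, x.2⟩)
  exact hfj

theorem eq_of_toPair_le (hs : Pairwise (Disjoint on s)) {f g : HyperedgeChoice s}
    (hfg : f.toPair ≤ g.toPair) : f = g := by
  funext i
  cases hfi : f i with
  | none => exact (hfg.1 hfi).symm
  | some x =>
    exact ((mem_toPair_snd_iff hs g x).mp (hfg.2 ((mem_toPair_snd_iff hs f x).mpr hfi))).symm

theorem toPair_injective (hs : Pairwise (Disjoint on s)) :
    Function.Injective (toPair : HyperedgeChoice s → Set I × Set X) :=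
  fun _ _ hfg ↦ eq_of_toPair_le hs hfg.le

theorem isMinimalRHS_toPair (hs : Pairwise (Disjoint on s)) (f : HyperedgeChoice s) :
    IsMinimalRHS s f.toPair.1 f.toPair.2 := by
  refine ⟨f.isRHS_toPair, fun P₁ P₂ hP hP₁ hP₂ ↦ ?_⟩
  obtain ⟨g, hgP⟩ := exists_toPair_le (R := (P₁, P₂)) hP
  obtain rfl : g = f := eq_of_toPair_le hs (hgP.trans ⟨hP₁, hP₂⟩)
  exact ⟨hP₁.antisymm hgP.1, hP₂.antisymm hgP.2⟩

end HyperedgeChoice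

section

variable {X I : Type*} {s : I → Set X}

theorem IsMinimalRHS.exists_toPair_eq {R : Set I × Set X} (hR : IsMinimalRHS s R.1 R.2) :
    ∃ f : HyperedgeChoice s, f.toPair = R := by
  obtain ⟨f, hfR⟩ := HyperedgeChoice.exists_toPair_le hR.1
  obtain ⟨h₁, h₂⟩ := hR.2 _ _ f.isRHS_toPair hfR.1 hfR.2
  exact ⟨f, Prod.ext h₁ h₂⟩

theorem setOf_isMinimalRHS_eq_range_toPair (hs : Pairwise (Disjoint on s)) :
    {R : Set I × Set X | IsMinimalRHS s R.1 R.2} =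
      Set.range (HyperedgeChoice.toPair : HyperedgeChoice s → Set I × Set X) := by
  ext R
  refine ⟨IsMinimalRHS.exists_toPair_eq, ?_⟩
  rintro ⟨f, rfl⟩
  exact f.isMinimalRHS_toPair hs

theorem ncard_setOf_isMinimalRHS [Fintype I] (hs : Pairwise (Disjoint on s))
    (hfin : ∀ i, (s i).Finite) :
    {R : Set I × Set X | IsMinimalRHS s R.1 R.2}.ncard = ∏ i, ((s i).ncard + 1) := by
  have hcard (i : I) : Nat.card (Option (s i)) = (s i).ncard + 1 := by
    have := (hfin i).to_subtype
    rw [Finite.card_option, Nat.card_coe_set_eq]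
  calc {R : Set I × Set X | IsMinimalRHS s R.1 R.2}.ncard
      = Nat.card (HyperedgeChoice s) := by
        rw [setOf_isMinimalRHS_eq_range_toPair hs, ← Nat.card_coe_set_eq,
          Nat.card_range_of_injective (HyperedgeChoice.toPair_injective hs)]
    _ = ∏ i, ((s i).ncard + 1) := by
        simp only [Nat.card_pi, hcard]

end

/-- The `i`-th of the `n` disjoint pairs into which `Fin (2 * n)` splits; with indices starting
at `0`, it is `{2i, 2i + 1}`. -/
def consecutivePair (n : ℕ) (i : Fin n) : Set (Fin (2 * n)) :=
  {j | (j : ℕ) = 2 * (i : ℕ) ∨ (j : ℕ) = 2 * (i : ℕ) + 1}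

theorem pairwise_disjoint_consecutivePair (n : ℕ) : Pairwise (Disjoint on consecutivePair n) := by
  intro i k hik
  refine Set.disjoint_left.mpr fun j hji hjk ↦ hik (Fin.ext ?_)
  simp only [consecutivePair, Set.mem_ofPred_eq] at hji hjk
  omega

theorem ncard_consecutivePair (n : ℕ) (i : Fin n) : (consecutivePair n i).ncard = 2 := by
  have hpair : consecutivePair n i = {⟨2 * i, by omega⟩, ⟨2 * i + 1, by omega⟩} := by
    ext j
    simp only [consecutivePair, Set.mem_ofPred_eq, Set.mem_insert_iff, Set.mem_singleton_iff,
      Fin.ext_iff]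
  rw [hpair, Set.ncard_pair (by simp [Fin.ext_iff])]

theorem ncard_setOf_isMinimalRHS_consecutivePair (n : ℕ) :
    {R : Set (Fin n) × Set (Fin (2 * n)) |
      IsMinimalRHS (consecutivePair n) R.1 R.2}.ncard = 3 ^ n := by
  rw [ncard_setOf_isMinimalRHS (pairwise_disjoint_consecutivePair n) fun _ ↦ Set.toFinite _]
  simp [ncard_consecutivePair]

/-- The hypergraph on `2n` vertices whose `n` hyperedges are the
disjoint pairs `{x_{2i}, x_{2i+1}}` has exactly `3^n` minimal Roman hitting
sets; in particular at least `3^((|X|+|I|)/3)` many. -/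
theorem count_minimalRHS_disjoint_pairs (n : ℕ) (hn : 1 ≤ n) :
    {p : Set (Fin n) × Set (Fin (2 * n)) |
        IsMinimalRHS
          (fun i : Fin n => {j : Fin (2 * n) |
            (j : ℕ) = 2 * (i : ℕ) ∨ (j : ℕ) = 2 * (i : ℕ) + 1})
          p.1 p.2}.ncard = 3 ^ n ∧
      3 ^ ((Fintype.card (Fin (2 * n)) + Fintype.card (Fin n)) / 3) ≤
        {p : Set (Fin n) × Set (Fin (2 * n)) |
          IsMinimalRHS
            (fun i : Fin n => {j : Fin (2 * n) |
              (j : ℕ) = 2 * (i : ℕ) ∨ (j : ℕ) = 2 * (i : ℕ) + 1})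
            p.1 p.2}.ncard := by
  have hcount := ncard_setOf_isMinimalRHS_consecutivePair n
  have hexp : (Fintype.card (Fin (2 * n)) + Fintype.card (Fin n)) / 3 = n := by
    simp only [Fintype.card_fin]
    omega
  exact ⟨hcount, hexp.symm ▸ hcount.ge⟩
end
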